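/- arXiv:1906.05479 — 2 statements merged into one kernel-verified Lean document; each statement's English description precedes it below -/
import Mathlib

section
/- For any A ∈ D_f, any M ∈ ℕ, and any B ∈ 𝒜 with E_M(B) = B, the product BA belongs to D_f and satisfies ‖BA‖_f ≤ (1 + max{2/f(M), 1}) · ‖B‖ · ‖A‖_f. -/
open Filter

variable {𝒜 : Type*}

/-- The quasi-locality norm `‖A‖_f = ‖A‖ + sup_{N ≥ 1} ‖A - E_N(A)‖ / f(N)`
(as a real number; the supremum is the real `sSup` of the corresponding set). -/
noncomputable def fnorm [NormedRing 𝒜] [NormedAlgebra ℂ 𝒜]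
    (E : ℕ → 𝒜 →ₗ[ℂ] 𝒜) (f : ℝ → ℝ) (A : 𝒜) : ℝ :=
  ‖A‖ + sSup {r : ℝ | ∃ N : ℕ, 1 ≤ N ∧ r = ‖A - E N A‖ / f N}

/-- `A ∈ D_f` iff `‖A‖_f < ∞`, i.e. the family `‖A - E_N(A)‖ / f(N)` is bounded above. -/
def memDf [NormedRing 𝒜] [NormedAlgebra ℂ 𝒜]
    (E : ℕ → 𝒜 →ₗ[ℂ] 𝒜) (f : ℝ → ℝ) (A : 𝒜) : Prop :=
  BddAbove {r : ℝ | ∃ N : ℕ, 1 ≤ N ∧ r = ‖A - E N A‖ / f N}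

/-!
Left multiplication by an element `B` fixed by `E M` has two regimes. For `N ≥ M` the map `E N` also
fixes `B`, so `E N (B * A) = B * E N A` and the deviation of `B * A` is at most `‖B‖` times that of
`A`. For `N ≤ M` contractivity bounds the deviation by `2 * ‖B‖ * ‖A‖`, and `f N ≥ f M`, which is
the origin of the term `2 / f M`.
-/

open Function (IsFixedPt)

theorem isFixedPt_of_le {ι α : Type*} [SemilatticeInf ι] {E : ι → α → α}
    (hE_comp : ∀ i j x, E i (E j x) = E (i ⊓ j) x) {i j : ι} (hij : i ≤ j) {x : α}
    (hx : IsFixedPt (E i) x) : IsFixedPt (E j) x :=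
  calc
    E j x = E j (E i x) := by rw [hx.eq]
    _ = E (j ⊓ i) x := hE_comp j i x
    _ = x := by rw [inf_eq_right.mpr hij, hx.eq]

section NormedRing

variable {R : Type*} [NonUnitalSeminormedRing R] {a b : R}

theorem norm_mul_sub_map_mul_le {T : R → R} (hT : T (b * a) = b * T a) :
    ‖b * a - T (b * a)‖ ≤ ‖b‖ * ‖a - T a‖ := by
  rw [hT, ← mul_sub]
  exact norm_mul_le b (a - T a)

theorem norm_mul_sub_le_two_mul {c : R} (hc : ‖c‖ ≤ ‖b * a‖) :
    ‖b * a - c‖ ≤ 2 * (‖b‖ * ‖a‖) :=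
  calc
    ‖b * a - c‖ ≤ ‖b * a‖ + ‖b * a‖ := norm_sub_le_of_le le_rfl hc
    _ = 2 * ‖b * a‖ := (two_mul _).symm
    _ ≤ 2 * (‖b‖ * ‖a‖) := by
      gcongr
      exact norm_mul_le b a

end NormedRing

section QuasiLocalNorm

variable [NormedRing 𝒜] [NormedAlgebra ℂ 𝒜] {E : ℕ → 𝒜 →ₗ[ℂ] 𝒜} {f : ℝ → ℝ} {A B : 𝒜}
  {M N : ℕ} {C : ℝ}

theorem memDf_of_forall_div_le (h : ∀ N : ℕ, 1 ≤ N → ‖A - E N A‖ / f N ≤ C) : memDf E f A := by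
  refine ⟨C, ?_⟩
  rintro _ ⟨N, hN, rfl⟩
  exact h N hN

theorem fnorm_le_norm_add (h : ∀ N : ℕ, 1 ≤ N → ‖A - E N A‖ / f N ≤ C) :
    fnorm E f A ≤ ‖A‖ + C := by
  unfold fnorm
  gcongr
  refine csSup_le ⟨_, 1, le_rfl, rfl⟩ ?_
  rintro _ ⟨N, hN, rfl⟩
  exact h N hN

theorem norm_le_fnorm (hf : ∀ N : ℕ, 1 ≤ N → 0 ≤ f N) : ‖A‖ ≤ fnorm E f A := by
  refine le_add_of_nonneg_right (Real.sSup_nonneg ?_)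
  rintro _ ⟨N, hN, rfl⟩
  exact div_nonneg (norm_nonneg _) (hf N hN)

theorem norm_sub_div_le_fnorm (hA : memDf E f A) (hN : 1 ≤ N) :
    ‖A - E N A‖ / f N ≤ fnorm E f A :=
  (le_csSup hA ⟨N, hN, rfl⟩).trans (le_add_of_nonneg_left (norm_nonneg A))

theorem norm_mul_sub_div_le_of_isFixedPt (hE_mul : ∀ x y, E N (E N x * y) = E N x * E N y)
    (hB : IsFixedPt (E N) B) (hf : 0 ≤ f N) (hA : memDf E f A) (hN : 1 ≤ N) :
    ‖B * A - E N (B * A)‖ / f N ≤ ‖B‖ * fnorm E f A := by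
  have map_mul : E N (B * A) = B * E N A := by simpa only [hB.eq] using hE_mul B A
  calc
    ‖B * A - E N (B * A)‖ / f N ≤ ‖B‖ * ‖A - E N A‖ / f N := by
      gcongr
      exact norm_mul_sub_map_mul_le map_mul
    _ = ‖B‖ * (‖A - E N A‖ / f N) := mul_div_assoc _ _ _
    _ ≤ ‖B‖ * fnorm E f A := by
      gcongr
      exact norm_sub_div_le_fnorm hA hN

theorem norm_mul_sub_div_le (hE_norm : ∀ (N : ℕ) (x : 𝒜), ‖E N x‖ ≤ ‖x‖)
    (hE_comp : ∀ (N M : ℕ) (x : 𝒜), E N (E M x) = E (min N M) x)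
    (hE_mul : ∀ (N : ℕ) (x y : 𝒜), E N (E N x * y) = E N x * E N y)
    (hf_anti : AntitoneOn f (Set.Ioi 0)) (hf_pos : ∀ t : ℝ, 0 < t → 0 < f t)
    (hA : memDf E f A) (hM : 1 ≤ M) (hB : IsFixedPt (E M) B) (hN : 1 ≤ N) :
    ‖B * A - E N (B * A)‖ / f N ≤ max (2 / f M) 1 * (‖B‖ * fnorm E f A) := by
  have cast_pos {n : ℕ} (hn : 1 ≤ n) : (0 : ℝ) < n := Nat.cast_pos.mpr hn
  have f_pos (n : ℕ) (hn : 1 ≤ n) : 0 < f n := hf_pos n (cast_pos hn)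
  have norm_le : ‖A‖ ≤ fnorm E f A := norm_le_fnorm fun n hn => (f_pos n hn).le
  have fnorm_nonneg : 0 ≤ fnorm E f A := (norm_nonneg A).trans norm_le
  rcases le_total M N with hMN | hNM
  · have hBN : IsFixedPt (E N) B := isFixedPt_of_le (E := fun n => E n) hE_comp hMN hB
    calc
      ‖B * A - E N (B * A)‖ / f N ≤ ‖B‖ * fnorm E f A :=
        norm_mul_sub_div_le_of_isFixedPt (hE_mul N) hBN (f_pos N hN).le hA hN
      _ ≤ max (2 / f M) 1 * (‖B‖ * fnorm E f A) :=
        le_mul_of_one_le_left (by positivity) (le_max_right _ _)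
  · have f_le : f M ≤ f N := hf_anti (cast_pos hN) (cast_pos hM) (Nat.cast_le.mpr hNM)
    calc
      ‖B * A - E N (B * A)‖ / f N ≤ 2 * (‖B‖ * ‖A‖) / f M :=
        div_le_div₀ (by positivity) (norm_mul_sub_le_two_mul (hE_norm N (B * A)))
          (f_pos M hM) f_le
      _ = 2 / f M * (‖B‖ * ‖A‖) := mul_div_right_comm _ _ _
      _ ≤ max (2 / f M) 1 * (‖B‖ * fnorm E f A) := by
        gcongr
        exact le_max_left _ _

end QuasiLocalNorm

theorem stmt_9_general [NormedRing 𝒜] [NormedAlgebra ℂ 𝒜]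
    (E : ℕ → 𝒜 →ₗ[ℂ] 𝒜)
    (hE_norm : ∀ (N : ℕ) (x : 𝒜), ‖E N x‖ ≤ ‖x‖)
    (hE_comp : ∀ (N M : ℕ) (x : 𝒜), E N (E M x) = E (min N M) x)
    (hE_mul : ∀ (N : ℕ) (x y : 𝒜), E N (E N x * y) = E N x * E N y)
    (f : ℝ → ℝ) (hf_anti : AntitoneOn f (Set.Ioi 0)) (hf_pos : ∀ t : ℝ, 0 < t → 0 < f t)
    (A B : 𝒜) (hA : memDf E f A) (M : ℕ) (hM : 1 ≤ M) (hB : E M B = B) :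
    memDf E f (B * A) ∧
    fnorm E f (B * A) ≤ (1 + max (2 / f M) 1) * ‖B‖ * fnorm E f A := by
  have deviation_le (N : ℕ) (hN : 1 ≤ N) :
      ‖B * A - E N (B * A)‖ / f N ≤ max (2 / f M) 1 * (‖B‖ * fnorm E f A) :=
    norm_mul_sub_div_le hE_norm hE_comp hE_mul hf_anti hf_pos hA hM hB hN
  have norm_le : ‖A‖ ≤ fnorm E f A :=
    norm_le_fnorm fun N hN => (hf_pos N (Nat.cast_pos.mpr hN)).le
  refine ⟨memDf_of_forall_div_le deviation_le, ?_⟩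
  calc
    fnorm E f (B * A) ≤ ‖B * A‖ + max (2 / f M) 1 * (‖B‖ * fnorm E f A) :=
      fnorm_le_norm_add deviation_le
    _ ≤ ‖B‖ * fnorm E f A + max (2 / f M) 1 * (‖B‖ * fnorm E f A) := by
      gcongr
      exact norm_mul_le_of_le le_rfl norm_le
    _ = (1 + max (2 / f M) 1) * ‖B‖ * fnorm E f A := by ring

theorem stmt_9 [NormedRing 𝒜] [StarRing 𝒜] [CStarRing 𝒜] [CompleteSpace 𝒜]
    [NormedAlgebra ℂ 𝒜] [StarModule ℂ 𝒜]
    (E : ℕ → 𝒜 →ₗ[ℂ] 𝒜)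
    (hE_norm : ∀ (N : ℕ) (x : 𝒜), ‖E N x‖ ≤ ‖x‖)
    (hE_star : ∀ (N : ℕ) (x : 𝒜), E N (star x) = star (E N x))
    (hE_comp : ∀ (N M : ℕ) (x : 𝒜), E N (E M x) = E (min N M) x)
    (hE_mul₁ : ∀ (N : ℕ) (x y : 𝒜), E N (E N x * y) = E N x * E N y)
    (hE_mul₂ : ∀ (N : ℕ) (x y : 𝒜), E N (x * E N y) = E N x * E N y)
    (f : ℝ → ℝ) (hf_cont : ContinuousOn f (Set.Ioi 0))
    (hf_anti : AntitoneOn f (Set.Ioi 0)) (hf_pos : ∀ t : ℝ, 0 < t → 0 < f t)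
    (hf_lim : Tendsto f atTop (nhds 0))
    (A B : 𝒜) (hA : memDf E f A) (M : ℕ) (hM : 1 ≤ M) (hB : E M B = B) :
    memDf E f (B * A) ∧
    fnorm E f (B * A) ≤ (1 + max (2 / f M) 1) * ‖B‖ * fnorm E f A :=
  stmt_9_general E hE_norm hE_comp hE_mul₁ f hf_anti hf_pos A B hA M hM hB
end

section
/- Let f, f₁ : (0,∞) → (0,∞) be continuous decreasing functions with lim_{t→∞} f(t) = 0, and suppose lim_{N→∞} f(N)/f₁(N) = 0. Then for every A ∈ D_f one has lim_{M→∞} ‖A − E_M(A)‖_{f₁} = 0, where ‖x‖_{f₁} := ‖x‖ + sup_{N∈ℕ} ‖x − E_N(x)‖/f₁(N). -/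
open Filter

variable {𝒜 : Type*}

/-!
Compatibility of the `E N` gives `(1 - E N) (1 - E M) A = (1 - E (max M N)) A`. As `f₁` is
decreasing, the supremum in `‖A - E M A‖_{f₁}` is therefore controlled by the tail `N ≥ M` of
`‖A - E N A‖ / f₁ N`, and this tail is small because `A - E N A = O(f N) = o(f₁ N)`.
-/

open Asymptotics

theorem sub_map_sub_map_eq_sub_map_max {ι G F : Type*} [LinearOrder ι] [AddGroup G]
    [FunLike F G G] [AddMonoidHomClass F G G] {E : ι → F}
    (hE : ∀ N M x, E N (E M x) = E (min N M) x) (M N : ι) (A : G) :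
    A - E M A - E N (A - E M A) = A - E (max M N) A := by
  rw [map_sub, hE]
  rcases le_total M N with h | h
  · rw [min_eq_right h, max_eq_right h, sub_sub_sub_cancel_right]
  · rw [min_eq_left h, max_eq_left h, sub_self, sub_zero]

section QuasiLocalityNorm

variable [NormedRing 𝒜] [NormedAlgebra ℂ 𝒜] {E : ℕ → 𝒜 →ₗ[ℂ] 𝒜} {f : ℝ → ℝ} {A : 𝒜}

theorem fnorm_nonneg (hf : ∀ N : ℕ, 1 ≤ N → 0 ≤ f N) : 0 ≤ fnorm E f A := by
  refine add_nonneg (norm_nonneg _) (Real.sSup_nonneg ?_)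
  rintro _ ⟨N, hN, rfl⟩
  exact div_nonneg (norm_nonneg _) (hf N hN)

theorem memDf.isBigO (hA : memDf E f A) (hf : ∀ᶠ N : ℕ in atTop, 0 < f N) :
    (fun N : ℕ => A - E N A) =O[atTop] fun N : ℕ => f N := by
  obtain ⟨C, hC⟩ := hA
  refine .of_bound C ?_
  filter_upwards [hf, eventually_ge_atTop 1] with N hfN hN
  rw [Real.norm_of_nonneg hfN.le, ← div_le_iff₀ hfN]
  exact hC ⟨N, hN, rfl⟩

theorem fnorm_sub_map_le (hE : ∀ (N M : ℕ) (x : 𝒜), E N (E M x) = E (min N M) x)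
    (hf_pos : ∀ N : ℕ, 1 ≤ N → 0 < f N)
    (hf_anti : AntitoneOn (fun N : ℕ => f N) (Set.Ici 1)) {M : ℕ} (hM : 1 ≤ M) {δ : ℝ}
    (htail : ∀ N, M ≤ N → ‖A - E N A‖ ≤ δ * f N) :
    fnorm E f (A - E M A) ≤ δ * (f M + 1) := by
  have hδ : 0 ≤ δ :=
    nonneg_of_mul_nonneg_left ((norm_nonneg _).trans (htail M le_rfl)) (hf_pos M hM)
  rw [mul_add, mul_one]
  refine add_le_add (htail M le_rfl) (Real.sSup_le ?_ hδ)
  rintro _ ⟨N, hN, rfl⟩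
  rw [sub_map_sub_map_eq_sub_map_max hE, div_le_iff₀ (hf_pos N hN)]
  calc ‖A - E (max M N) A‖ ≤ δ * f ↑(max M N) := htail _ (le_max_left M N)
    _ ≤ δ * f N := by
      gcongr
      exact hf_anti hN (le_max_of_le_left hM) (le_max_right M N)

theorem tendsto_fnorm_sub_map_of_isLittleO
    (hE : ∀ (N M : ℕ) (x : 𝒜), E N (E M x) = E (min N M) x)
    (hf_pos : ∀ N : ℕ, 1 ≤ N → 0 < f N)
    (hf_anti : AntitoneOn (fun N : ℕ => f N) (Set.Ici 1))
    (hA : (fun N : ℕ => A - E N A) =o[atTop] fun N : ℕ => f N) :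
    Tendsto (fun M : ℕ => fnorm E f (A - E M A)) atTop (nhds 0) := by
  have hpos : 0 < f (1 : ℕ) + 1 := add_pos (hf_pos 1 le_rfl) one_pos
  rw [← isLittleO_const_iff hpos.ne', isLittleO_iff]
  intro δ hδ
  have eventually_tail : ∀ᶠ M in atTop, ∀ N, M ≤ N → ‖A - E N A‖ ≤ δ * ‖f N‖ :=
    eventually_forall_ge_atTop.2 (hA.def hδ)
  filter_upwards [eventually_tail, eventually_ge_atTop 1] with M htail hM
  rw [Real.norm_of_nonneg (fnorm_nonneg fun N hN => (hf_pos N hN).le),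
    Real.norm_of_nonneg hpos.le]
  calc fnorm E f (A - E M A) ≤ δ * (f M + 1) :=
        fnorm_sub_map_le hE hf_pos hf_anti hM fun N hMN =>
          (htail N hMN).trans_eq (by rw [Real.norm_of_nonneg (hf_pos N (hM.trans hMN)).le])
    _ ≤ δ * (f (1 : ℕ) + 1) := by
      gcongr
      exact hf_anti Set.self_mem_Ici hM hM

end QuasiLocalityNorm

theorem stmt_10_general [NormedRing 𝒜] [NormedAlgebra ℂ 𝒜]
    (E : ℕ → 𝒜 →ₗ[ℂ] 𝒜)
    (hE_comp : ∀ (N M : ℕ) (x : 𝒜), E N (E M x) = E (min N M) x)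
    (f f₁ : ℝ → ℝ)
    (hf_pos : ∀ t : ℝ, 0 < t → 0 < f t)
    (hf₁_anti : AntitoneOn f₁ (Set.Ioi 0)) (hf₁_pos : ∀ t : ℝ, 0 < t → 0 < f₁ t)
    (hratio : Tendsto (fun N : ℕ => f N / f₁ N) atTop (nhds 0))
    (A : 𝒜) (hA : memDf E f A) :
    Tendsto (fun M : ℕ => fnorm E f₁ (A - E M A)) atTop (nhds 0) := by
  have hf₁_nat_pos (N : ℕ) (hN : 1 ≤ N) : 0 < f₁ N := hf₁_pos N (Nat.cast_pos.2 hN)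
  have hf₁_nat_anti : AntitoneOn (fun N : ℕ => f₁ N) (Set.Ici 1) :=
    fun _ hM _ hN hMN => hf₁_anti (Set.mem_Ioi.2 (Nat.cast_pos.2 hM))
      (Set.mem_Ioi.2 (Nat.cast_pos.2 hN)) (Nat.cast_le.2 hMN)
  have hA_isBigO : (fun N : ℕ => A - E N A) =O[atTop] fun N : ℕ => f N :=
    hA.isBigO ((eventually_ge_atTop 1).mono fun N hN => hf_pos N (Nat.cast_pos.2 hN))
  have hf_isLittleO : (fun N : ℕ => f N) =o[atTop] fun N : ℕ => f₁ N :=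
    isLittleO_of_tendsto' ((eventually_ge_atTop 1).mono fun N hN h =>
      ((hf₁_nat_pos N hN).ne' h).elim) hratio
  exact tendsto_fnorm_sub_map_of_isLittleO hE_comp hf₁_nat_pos hf₁_nat_anti
    (hA_isBigO.trans_isLittleO hf_isLittleO)

theorem stmt_10 [NormedRing 𝒜] [StarRing 𝒜] [CStarRing 𝒜] [CompleteSpace 𝒜]
    [NormedAlgebra ℂ 𝒜] [StarModule ℂ 𝒜]
    (E : ℕ → 𝒜 →ₗ[ℂ] 𝒜)
    (hE_norm : ∀ (N : ℕ) (x : 𝒜), ‖E N x‖ ≤ ‖x‖)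
    (hE_star : ∀ (N : ℕ) (x : 𝒜), E N (star x) = star (E N x))
    (hE_comp : ∀ (N M : ℕ) (x : 𝒜), E N (E M x) = E (min N M) x)
    (hE_mul₁ : ∀ (N : ℕ) (x y : 𝒜), E N (E N x * y) = E N x * E N y)
    (hE_mul₂ : ∀ (N : ℕ) (x y : 𝒜), E N (x * E N y) = E N x * E N y)
    (f f₁ : ℝ → ℝ)
    (hf_cont : ContinuousOn f (Set.Ioi 0))
    (hf_anti : AntitoneOn f (Set.Ioi 0)) (hf_pos : ∀ t : ℝ, 0 < t → 0 < f t)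
    (hf_lim : Tendsto f atTop (nhds 0))
    (hf₁_cont : ContinuousOn f₁ (Set.Ioi 0))
    (hf₁_anti : AntitoneOn f₁ (Set.Ioi 0)) (hf₁_pos : ∀ t : ℝ, 0 < t → 0 < f₁ t)
    (hratio : Tendsto (fun N : ℕ => f N / f₁ N) atTop (nhds 0))
    (A : 𝒜) (hA : memDf E f A) :
    Tendsto (fun M : ℕ => fnorm E f₁ (A - E M A)) atTop (nhds 0) :=
  stmt_10_general E hE_comp f f₁ hf_pos hf₁_anti hf₁_pos hratio A hA
end
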